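/- Suppose liminf_{i→∞} p_i > 0. If there exists k ≥ 2 such that p_i = 1 for all i ∈ {2, 3, …, k} and p_{k+1} < 1/2, then the set E is not connected. -/

import Mathlib

/-- `rr p n = r_n = p (⌊(n+1)/2⌋ + 1)`. -/
noncomputable def rr (p : ℕ → ℝ) (n : ℕ) : ℝ := p ((n+1)/2 + 1)

/-- `qF p z n = q_{F_n}(z)`. -/
noncomputable def qF (p : ℕ → ℝ) (z : ℂ) : ℕ → ℂ
  | 0 => (z - (1 - (p 1 : ℂ))) / (p 1 : ℂ)
  | 1 => (1 / (p 2 : ℂ)) * (qF p z 0) ^ 2 - (1 / (p 2 : ℂ) - 1)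
  | (n+2) => (1 / (rr p (n+2) : ℂ)) * qF p z (n+1) * qF p z n - (1 / (rr p (n+2) : ℂ) - 1)

/-- The fibered filled Julia set `E = {z : (q_{F_n}(z))ₙ is bounded}`. -/
def Eset (p : ℕ → ℝ) : Set ℂ := {z : ℂ | ∃ C : ℝ, ∀ n : ℕ, ‖qF p z n‖ ≤ C}

open Complex Filter Topology

/-- Image of a bounded open set under an entire map that is large on the frontier. -/
lemma ball_sub_image (Ω : Set ℂ) (hΩ : IsOpen Ω) (hb : Bornology.IsBounded Ω) (f : ℂ → ℂ)
    (hf : Differentiable ℂ f) (hfr : ∀ w ∈ frontier Ω, 1 < ‖f w‖)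
    (hz : ∃ w ∈ Ω, f w = 0) (hx : ∃ x, 1 < ‖f x‖) (y : ℂ) (hy : ‖y‖ ≤ 1) :
    ∃ w ∈ Ω, f w = y := by
  obtain ⟨w0, hw0, hfw0⟩ := hz
  have han : AnalyticOnNhd ℂ f Set.univ := fun z _ => hf.analyticAt z
  have hU : IsOpen (f '' Ω) := by
    rcases han.is_constant_or_isOpen isPreconnected_univ with ⟨c, hc⟩ | h
    · obtain ⟨x, hx⟩ := hx
      rw [hc x trivial, ← hc w0 trivial, hfw0] at hx
      simp at hx
      linarith
    · exact h Ω (Set.subset_univ _) hΩ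
  have hcpt : IsCompact (closure Ω) := hb.isCompact_closure
  have hV : IsOpen (f '' closure Ω)ᶜ := (hcpt.image hf.continuous).isClosed.isOpen_compl
  have hpre : IsPreconnected (Metric.closedBall (0:ℂ) 1) := (convex_closedBall 0 1).isPreconnected
  have hdis : Disjoint (f '' Ω) (f '' closure Ω)ᶜ :=
    Set.disjoint_compl_right_iff_subset.mpr (Set.image_mono subset_closure)
  have hsub : Metric.closedBall (0:ℂ) 1 ⊆ f '' Ω ∪ (f '' closure Ω)ᶜ := by
    intro v hv
    by_cases h : v ∈ f '' closure Ω
    · left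
      obtain ⟨x, hx, rfl⟩ := h
      by_cases hxΩ : x ∈ Ω
      · exact ⟨x, hxΩ, rfl⟩
      · have : x ∈ frontier Ω := by
          rw [hΩ.frontier_eq]; exact ⟨hx, hxΩ⟩
        have h1 := hfr x this
        simp at hv
        linarith
    · exact Or.inr h
  have := hpre.subset_left_of_subset_union hU hV hdis hsub ⟨0, by simp, w0, hw0, hfw0⟩
  exact this (by simpa using hy)

/-- One step of the recursion: product formula. -/
lemma prod_eq (r : ℝ) (hr : 0 < r) (a b c : ℂ)
    (h : c = (1 / (r:ℂ)) * a * b - (1 / (r:ℂ) - 1)) : a * b = r * c + (1 - r) := by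
  have : (r:ℂ) ≠ 0 := by exact_mod_cast hr.ne'
  rw [h]; field_simp; ring

lemma norm_one_sub (r : ℝ) (hr1 : r ≤ 1) : ‖(1 - (r:ℂ))‖ = 1 - r := by
  have : (1 - (r:ℂ)) = ((1 - r : ℝ) : ℂ) := by push_cast; ring
  rw [this, Complex.norm_real, Real.norm_of_nonneg (by linarith)]

lemma normprod_le_step (r : ℝ) (hr : 0 < r) (hr1 : r ≤ 1) (a b c : ℂ)
    (h : c = (1 / (r:ℂ)) * a * b - (1 / (r:ℂ) - 1)) : ‖a‖ * ‖b‖ ≤ r * ‖c‖ + (1 - r) := by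
  rw [← norm_mul, prod_eq r hr a b c h]
  refine (norm_add_le _ _).trans ?_
  rw [norm_one_sub r hr1, norm_mul, Complex.norm_real, Real.norm_of_nonneg hr.le]

lemma norm_le_prod (r : ℝ) (hr : 0 < r) (hr1 : r ≤ 1) (a b c : ℂ)
    (h : c = (1 / (r:ℂ)) * a * b - (1 / (r:ℂ) - 1)) : r * ‖c‖ ≤ ‖a‖ * ‖b‖ + (1 - r) := by
  have h1 : (r:ℂ) * c = a * b - (1 - r) := by rw [prod_eq r hr a b c h]; ring
  have h2 : ‖(r:ℂ) * c‖ = r * ‖c‖ := by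
    rw [norm_mul, Complex.norm_real, Real.norm_of_nonneg hr.le]
  rw [← h2, h1]
  refine (norm_sub_le _ _).trans ?_
  rw [norm_one_sub r hr1, norm_mul]

/-- The abstract recursion. -/
def Rec (r : ℕ → ℝ) (x : ℕ → ℂ) : Prop :=
  ∀ n, x (n+2) = (1 / (r (n+2):ℂ)) * x (n+1) * x n - (1 / (r (n+2):ℂ) - 1)

lemma grow (r : ℕ → ℝ) (x : ℕ → ℂ) (hr : ∀ n, 0 < r n ∧ r n ≤ 1) (hx : Rec r x) (n : ℕ)
    (h0 : 1 < ‖x n‖) (h1 : 1 < ‖x (n+1)‖) : ‖x (n+1)‖ * ‖x n‖ ≤ ‖x (n+2)‖ := by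
  have h := normprod_le_step _ (hr (n+2)).1 (hr (n+2)).2 _ _ _ (hx n)
  obtain ⟨h2, h3⟩ := hr (n+2)
  have h4 : 1 < ‖x (n+1)‖ * ‖x n‖ := by nlinarith
  by_contra! h5
  nlinarith

lemma stay (r : ℕ → ℝ) (x : ℕ → ℂ) (hr : ∀ n, 0 < r n ∧ r n ≤ 1) (hx : Rec r x) (m : ℕ)
    (δ : ℝ) (hδ : 1 < δ) (h0 : δ ≤ ‖x m‖) (h1 : δ ≤ ‖x (m+1)‖) (i : ℕ) :
    δ ≤ ‖x (m+i)‖ ∧ δ ≤ ‖x (m+i+1)‖ ∧ δ ^ i ≤ ‖x (m+i+1)‖ := by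
  induction i with
  | zero => simp; exact ⟨h0, h1, by linarith⟩
  | succ i ih =>
    obtain ⟨a, b, c⟩ := ih
    have g := grow r x hr hx (m+i) (by linarith) (by linarith)
    have e : m + (i+1) + 1 = m + i + 2 := by ring
    rw [e]
    refine ⟨b, ?_, ?_⟩
    · nlinarith
    · rw [pow_succ]
      have : 0 < δ ^ i := by positivity
      calc δ ^ i * δ ≤ ‖x (m+i+1)‖ * ‖x (m+i)‖ := by gcongr
        _ ≤ _ := g

lemma stay1 (r : ℕ → ℝ) (x : ℕ → ℂ) (hr : ∀ n, 0 < r n ∧ r n ≤ 1) (hx : Rec r x) (m : ℕ)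
    (h0 : 1 < ‖x m‖) (h1 : 1 < ‖x (m+1)‖) (n : ℕ) (hn : m ≤ n) : 1 < ‖x n‖ := by
  obtain ⟨i, rfl⟩ := Nat.exists_eq_add_of_le hn
  have := (stay r x hr hx m (min ‖x m‖ ‖x (m+1)‖) (lt_min h0 h1) (min_le_left _ _)
    (min_le_right _ _) i).1
  exact lt_of_lt_of_le (lt_min h0 h1) this

lemma escape (r : ℕ → ℝ) (x : ℕ → ℂ) (hr : ∀ n, 0 < r n ∧ r n ≤ 1) (hx : Rec r x) (m : ℕ)
    (h0 : 1 < ‖x m‖) (h1 : 1 < ‖x (m+1)‖) : ¬ ∃ C : ℝ, ∀ n, ‖x n‖ ≤ C := by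
  rintro ⟨C, hC⟩
  obtain ⟨i, hi⟩ := pow_unbounded_of_one_lt C (lt_min h0 h1)
  have := (stay r x hr hx m (min ‖x m‖ ‖x (m+1)‖) (lt_min h0 h1) (min_le_left _ _)
    (min_le_right _ _) i).2.2
  linarith [hC (m+i+1)]

lemma bdd_of (r : ℕ → ℝ) (x : ℕ → ℂ) (hr : ∀ n, 0 < r n ∧ r n ≤ 1) (hx : Rec r x)
    (c : ℝ) (hc : 0 < c) (n0 : ℕ) (hrc : ∀ n, n0 ≤ n → c ≤ r n)
    (h : ∀ m, 1 < ‖x m‖ → ‖x (m+1)‖ ≤ 1) : ∃ C : ℝ, ∀ n, ‖x n‖ ≤ C := by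
  obtain ⟨B, hB1, hBc, hB0, hB01⟩ : ∃ B : ℝ, 1 ≤ B ∧ 2 / c ≤ B ∧ ‖x n0‖ ≤ B ∧ ‖x (n0+1)‖ ≤ B := by
    refine ⟨1 + 2 / c + ‖x n0‖ + ‖x (n0+1)‖, ?_, ?_, ?_, ?_⟩ <;>
    · have := norm_nonneg (x n0)
      have := norm_nonneg (x (n0+1))
      have : 0 < 2 / c := by positivity
      linarith
  have key : ∀ i, ‖x (n0+i)‖ ≤ B ∧ ‖x (n0+i+1)‖ ≤ B := by
    intro i
    induction i with
    | zero => exact ⟨hB0, hB01⟩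
    | succ i ih =>
      refine ⟨ih.2, ?_⟩
      have e : n0 + (i+1) + 1 = n0 + i + 2 := by ring
      rw [e]
      set n := n0 + i with hn
      by_contra! hX
      have hX1 : 1 < ‖x (n+2)‖ := by linarith
      have h3 : ‖x (n+3)‖ ≤ 1 := h _ hX1
      have g1 := normprod_le_step _ (hr (n+3)).1 (hr (n+3)).2 _ _ _ (hx (n+1))
      have g2 := norm_le_prod _ (hr (n+2)).1 (hr (n+2)).2 _ _ _ (hx n)
      have hcr := hrc (n+2) (by omega)
      have g3 : ‖x (n+2)‖ * ‖x (n+1)‖ ≤ 1 := by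
        have := (hr (n+3)).1
        have e : n + 1 + 1 = n + 2 := rfl
        have e' : n + 1 + 2 = n + 3 := rfl
        rw [e, e'] at g1
        nlinarith
      have g4 : c * ‖x (n+2)‖ ≤ ‖x (n+1)‖ * ‖x n‖ + 1 := by
        have : c * ‖x (n+2)‖ ≤ r (n+2) * ‖x (n+2)‖ := by gcongr
        linarith [(hr (n+2)).1]
      have g5 : c * ‖x (n+2)‖ * ‖x (n+2)‖ ≤ ‖x n‖ + ‖x (n+2)‖ := by
        calc c * ‖x (n+2)‖ * ‖x (n+2)‖ ≤ (‖x (n+1)‖ * ‖x n‖ + 1) * ‖x (n+2)‖ := by gcongr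
          _ = (‖x (n+2)‖ * ‖x (n+1)‖) * ‖x n‖ + ‖x (n+2)‖ := by ring
          _ ≤ 1 * ‖x n‖ + ‖x (n+2)‖ := by gcongr
          _ = _ := by ring
      have g6 : c * ‖x (n+2)‖ * ‖x (n+2)‖ < 2 * ‖x (n+2)‖ := by linarith [ih.1]
      have g7 : c * ‖x (n+2)‖ < 2 := lt_of_mul_lt_mul_right g6 (by positivity)
      have g8 : ‖x (n+2)‖ < 2 / c := by
        rw [lt_div_iff₀ hc]; linarith
      linarith
  refine ⟨B + ∑ i ∈ Finset.range n0, ‖x i‖, fun n => ?_⟩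
  have hs : 0 ≤ ∑ i ∈ Finset.range n0, ‖x i‖ := Finset.sum_nonneg (fun _ _ => norm_nonneg _)
  rcases lt_or_ge n n0 with hn | hn
  · have := Finset.single_le_sum (f := fun i => ‖x i‖) (s := Finset.range n0)
      (fun _ _ => norm_nonneg _) (Finset.mem_range.mpr hn)
    linarith
  · obtain ⟨i, rfl⟩ := Nat.exists_eq_add_of_le hn
    linarith [(key i).1]

/-- Cassini identity in the form needed. -/
lemma cassini (k : ℕ) : Nat.fib (2*k+2) ^ 2 + 1 = Nat.fib (2*k+3) * Nat.fib (2*k+1) := by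
  induction k with
  | zero => decide
  | succ k ih =>
    have e3 : Nat.fib (2*k+3) = Nat.fib (2*k+1) + Nat.fib (2*k+2) := Nat.fib_add_two
    have e4 : Nat.fib (2*k+4) = Nat.fib (2*k+2) + Nat.fib (2*k+3) := Nat.fib_add_two
    have e5 : Nat.fib (2*k+5) = Nat.fib (2*k+3) + Nat.fib (2*k+4) := Nat.fib_add_two
    change Nat.fib (2*k+4) ^ 2 + 1 = Nat.fib (2*k+5) * Nat.fib (2*k+3)
    rw [e5, e4]
    rw [e3] at ih ⊢
    nlinarith

lemma angle (a M N : ℕ) (hN : N = M + a) (ha : 0 < a) (haM : a < M) (hc : M ^ 2 + 1 = N * a) :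
    ∃ j : ℕ, Odd j ∧ 0 < j ∧ j < N ∧ 0 ≤ Real.cos (M * (j * Real.pi / N)) := by
  have hN0 : (0:ℝ) < N := by exact_mod_cast (by omega : 0 < N)
  have hN4 : 4 ≤ N := by
    by_contra! h
    have : a = 1 := by omega
    have : M = 2 := by omega
    subst a M; omega
  have hN4' : (4:ℝ) ≤ N := by exact_mod_cast hN4
  have hcr : (M:ℝ) ^ 2 = N * a - 1 := by
    have : (M:ℝ) ^ 2 + 1 = N * a := by exact_mod_cast hc
    linarith
  have hcos : ∀ t : ℝ, 0 ≤ t → t ≤ 2 → 0 ≤ Real.cos (t * Real.pi / N) := by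
    intro t h0 h2
    have hpi := Real.pi_pos
    apply Real.cos_nonneg_of_mem_Icc
    constructor
    · have : 0 ≤ t * Real.pi / N := by positivity
      linarith
    · rw [div_le_iff₀ hN0]; nlinarith
  rcases Nat.even_or_odd M with hM | hM
  · have haodd : Odd a := by
      have : Odd (N * a) := by
        rw [← hc]; exact (hM.pow_of_ne_zero (by norm_num)).add_one
      exact (Nat.odd_mul.mp this).2
    refine ⟨M - a, Nat.Even.sub_odd haM.le hM haodd, by omega, by omega, ?_⟩
    obtain ⟨b, hb⟩ := hM
    have e : (M:ℝ) * (((M - a : ℕ) : ℝ) * Real.pi / N)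
        = ((a - b : ℤ) : ℝ) * (2 * Real.pi) - 2 * Real.pi / N := by
      have hb' : (M:ℝ) = b + b := by exact_mod_cast hb
      have hN' : (N:ℝ) = M + a := by exact_mod_cast hN
      rw [Nat.cast_sub haM.le]
      push_cast
      field_simp
      have : (b:ℝ) = M / 2 := by linarith
      rw [this]
      have : (a:ℝ) = N - M := by linarith
      rw [this] at hcr ⊢
      nlinarith
    rw [e, Real.cos_int_mul_two_pi_sub]
    exact hcos 2 (by norm_num) le_rfl
  · rcases Nat.even_or_odd a with hA | hA
    · refine ⟨M, hM, by omega, by omega, ?_⟩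
      obtain ⟨b, hb⟩ := hA
      have e : (M:ℝ) * ((M:ℝ) * Real.pi / N)
          = ((b : ℤ) : ℝ) * (2 * Real.pi) - 1 * Real.pi / N := by
        have hb' : (a:ℝ) = b + b := by exact_mod_cast hb
        push_cast
        field_simp
        rw [hcr, hb']; ring
      rw [e, Real.cos_int_mul_two_pi_sub]
      exact hcos 1 (by norm_num) (by norm_num)
    · refine ⟨a, hA, by omega, by omega, ?_⟩
      obtain ⟨b, hb⟩ := Nat.Odd.sub_odd hM hA
      have e : (M:ℝ) * ((a:ℝ) * Real.pi / N)
          = ((b : ℤ) : ℝ) * (2 * Real.pi) - (-(1 * Real.pi / N)) := by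
        have hb' : (M:ℝ) = a + b + b := by exact_mod_cast (by omega : M = a + b + b)
        have hN' : (N:ℝ) = M + a := by exact_mod_cast hN
        push_cast
        field_simp
        have : (b:ℝ) = (M - a) / 2 := by linarith
        rw [this]
        rw [hN'] at hcr ⊢
        nlinarith
      rw [e, Real.cos_int_mul_two_pi_sub, Real.cos_neg]
      exact hcos 1 (by norm_num) (by norm_num)

/-- The sequence in the coordinate `w = q_{F_0}`. -/
noncomputable def GG (p : ℕ → ℝ) (w : ℂ) (n : ℕ) : ℂ := qF p ((p 1 : ℂ) * w + (1 - (p 1 : ℂ))) n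

lemma GG_rec (p : ℕ → ℝ) (w : ℂ) : Rec (rr p) (GG p w) := by
  intro n
  simp only [GG]
  rw [qF]

lemma GG_zero (p : ℕ → ℝ) (h : 0 < p 1) (w : ℂ) : GG p w 0 = w := by
  have : (p 1 : ℂ) ≠ 0 := by exact_mod_cast h.ne'
  simp only [GG]
  rw [qF]
  field_simp
  ring

lemma GG_one (p : ℕ → ℝ) (h : 0 < p 1) (h2 : p 2 = 1) (w : ℂ) : GG p w 1 = w ^ 2 := by
  have := GG_zero p h w
  simp only [GG] at this ⊢
  rw [qF, this, h2]
  simp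

lemma qF_diff (p : ℕ → ℝ) (n : ℕ) :
    Differentiable ℂ (fun z => qF p z n) ∧ Differentiable ℂ (fun z => qF p z (n+1)) := by
  induction n with
  | zero =>
    have h0 : Differentiable ℂ (fun z => qF p z 0) := by
      simp only [qF]; fun_prop
    refine ⟨h0, ?_⟩
    have : (fun z => qF p z (0+1)) = fun z => (1 / (p 2 : ℂ)) * (qF p z 0) ^ 2 - (1 / (p 2 : ℂ) - 1) := by
      funext z; exact qF.eq_2 p z
    rw [this]
    fun_prop
  | succ n ih =>
    refine ⟨ih.2, ?_⟩
    have : (fun z => qF p z (n+1+1)) = fun z => (1 / (rr p (n+2) : ℂ)) * qF p z (n+1) * qF p z n - (1 / (rr p (n+2) : ℂ) - 1) := by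
      funext z; rw [qF]
    rw [this]
    have h1 := ih.1
    have h2 := ih.2
    fun_prop

lemma GG_diff (p : ℕ → ℝ) (n : ℕ) : Differentiable ℂ (fun w => GG p w n) := by
  have h := (qF_diff p n).1
  have h2 : Differentiable ℂ (fun w : ℂ => (p 1 : ℂ) * w + (1 - (p 1 : ℂ))) := by fun_prop
  exact h.comp h2

lemma GG_pow (p : ℕ → ℝ) (h : 0 < p 1) (k : ℕ) (hk : 2 ≤ k)
    (hone : ∀ i, 2 ≤ i → i ≤ k → p i = 1) (w : ℂ) (i : ℕ) (hi : i + 1 ≤ 2 * k - 2) :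
    GG p w i = w ^ Nat.fib (i+2) ∧ GG p w (i+1) = w ^ Nat.fib (i+3) := by
  induction i with
  | zero =>
    refine ⟨by rw [GG_zero p h]; simp, ?_⟩
    rw [zero_add, GG_one p h (hone 2 le_rfl hk)]
    rfl
  | succ i ih =>
    obtain ⟨a, b⟩ := ih (by omega)
    refine ⟨b, ?_⟩
    have e : rr p (i+2) = 1 := hone _ (by omega) (by omega)
    have := GG_rec p w i
    rw [e, a, b] at this
    change GG p w (i+2) = _
    rw [this]
    have e2 : Nat.fib (i+1+3) = Nat.fib (i+2) + Nat.fib (i+3) := Nat.fib_add_two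
    rw [e2]
    simp [pow_add, mul_comm]

/-- The truncated sector. -/
def Om (θ : ℝ) : Set ℂ := {w : ℂ | ‖w‖ < 2 ∧ w.re < ‖w‖ * Real.cos θ}

lemma Om_open (θ : ℝ) : IsOpen (Om θ) := by
  have h1 : IsOpen {w : ℂ | ‖w‖ < 2} := isOpen_lt (by fun_prop) (by fun_prop)
  have h2 : IsOpen {w : ℂ | w.re < ‖w‖ * Real.cos θ} := isOpen_lt (by fun_prop) (by fun_prop)
  exact h1.inter h2

lemma Om_bdd (θ : ℝ) : Bornology.IsBounded (Om θ) := by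
  refine (Metric.isBounded_ball (x := (0:ℂ)) (r := 2)).subset ?_
  intro w hw
  simpa using hw.1

lemma Om_frontier (θ : ℝ) (w : ℂ) (hw : w ∈ frontier (Om θ)) :
    ‖w‖ = 2 ∨ w = ‖w‖ * exp (θ * I) ∨ w = ‖w‖ * exp (-θ * I) := by
  rw [(Om_open θ).frontier_eq] at hw
  obtain ⟨hc, hn⟩ := hw
  have hcl : IsClosed {w : ℂ | ‖w‖ ≤ 2 ∧ w.re ≤ ‖w‖ * Real.cos θ} := by
    have h1 : IsClosed {w : ℂ | ‖w‖ ≤ 2} := isClosed_le (by fun_prop) (by fun_prop)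
    have h2 : IsClosed {w : ℂ | w.re ≤ ‖w‖ * Real.cos θ} := isClosed_le (by fun_prop) (by fun_prop)
    exact h1.inter h2
  have hm : w ∈ {w : ℂ | ‖w‖ ≤ 2 ∧ w.re ≤ ‖w‖ * Real.cos θ} :=
    closure_minimal (fun v (hv : v ∈ Om θ) => And.intro hv.1.le hv.2.le) hcl hc
  by_cases h2 : ‖w‖ = 2
  · exact Or.inl h2
  right
  have hre : w.re = ‖w‖ * Real.cos θ := by
    apply le_antisymm hm.2
    by_contra! h
    exact hn ⟨lt_of_le_of_ne hm.1 h2, h⟩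
  have hsq : w.im ^ 2 = (‖w‖ * Real.sin θ) ^ 2 := by
    have h1 : ‖w‖ ^ 2 = w.re ^ 2 + w.im ^ 2 := by
      rw [← Complex.normSq_eq_norm_sq, Complex.normSq_apply]; ring
    rw [hre] at h1
    have := Real.sin_sq_add_cos_sq θ
    nlinarith
  have e1 : exp (θ * I) = Complex.mk (Real.cos θ) (Real.sin θ) := by
    apply Complex.ext
    · simp [Complex.exp_ofReal_mul_I_re]
    · simp [Complex.exp_ofReal_mul_I_im]
  have e2 : exp (-θ * I) = Complex.mk (Real.cos θ) (-Real.sin θ) := by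
    have : (-θ * I : ℂ) = ((-θ : ℝ) : ℂ) * I := by push_cast; ring
    rw [this]
    apply Complex.ext
    · simp only [Complex.exp_ofReal_mul_I_re, Real.cos_neg]
    · simp only [Complex.exp_ofReal_mul_I_im, Real.sin_neg]
  rw [e1, e2]
  rcases sq_eq_sq_iff_eq_or_eq_neg.mp hsq with h | h
  · left
    apply Complex.ext
    · simpa using hre
    · simpa using h
  · right
    apply Complex.ext
    · simpa using hre
    · simpa using h

/-- Behaviour on a good ray. -/
lemma ray (s : ℝ) (hs : 0 < s) (hs2 : s < 1/2) (M N j : ℕ) (hN : 0 < N) (hj : Odd j)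
    (t ρ : ℝ) (hρ : 0 ≤ ρ) (ht : t = j * Real.pi / N ∨ t = -(j * Real.pi / N))
    (hcos : 0 ≤ Real.cos (M * (j * Real.pi / N))) (w a b : ℂ) (hw : w = ρ * exp (t * I))
    (ha : a = (1 / (s:ℂ)) * w ^ N - (1 / (s:ℂ) - 1))
    (hb : b = (1 / (s:ℂ)) * a * w ^ M - (1 / (s:ℂ) - 1)) : 1 < ‖a‖ ∧ 1 < ‖b‖ := by
  have hN0 : (N:ℝ) ≠ 0 := by exact_mod_cast hN.ne'
  have hpow : ∀ L : ℕ, w ^ L = ((ρ ^ L : ℝ) : ℂ) * exp (((L * t : ℝ) : ℂ) * I) := by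
    intro L
    rw [hw, mul_pow, ← Complex.exp_nat_mul]
    push_cast
    congr 2
    ring
  have hwN : w ^ N = ((-ρ ^ N : ℝ) : ℂ) := by
    rw [hpow N]
    have : exp (((N * t : ℝ) : ℂ) * I) = -1 := by
      have h1 : exp (((j * Real.pi : ℝ) : ℂ) * I) = -1 := by
        push_cast
        rw [mul_assoc, Complex.exp_nat_mul, Complex.exp_pi_mul_I, hj.neg_one_pow]
      rcases ht with ht | ht
      · have : (N * t : ℝ) = j * Real.pi := by rw [ht]; field_simp
        rw [this, h1]
      · have : (N * t : ℝ) = -(j * Real.pi) := by rw [ht]; field_simp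
        rw [this]
        have e : (((-(j * Real.pi) : ℝ) : ℂ) * I) = -(((j * Real.pi : ℝ) : ℂ) * I) := by
          push_cast; ring
        rw [e, Complex.exp_neg, h1]
        norm_num
    rw [this]; push_cast; ring
  have hcos' : 0 ≤ Real.cos (M * t) := by
    rcases ht with ht | ht
    · rw [ht]; exact hcos
    · rw [ht, mul_neg, Real.cos_neg]; exact hcos
  have hs1 : 2 < 1 / s := by
    rw [lt_div_iff₀ hs]; linarith
  set A : ℝ := (1/s) * ρ ^ N + (1/s - 1) with hA
  have hA1 : 1 < A := by
    have : 0 ≤ (1/s) * ρ ^ N := by positivity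
    linarith
  have haA : a = ((-A : ℝ) : ℂ) := by
    rw [ha, hwN, hA]; push_cast; ring
  have hre : b.re = -((1/s) * A * ρ ^ M * Real.cos (M * t)) - (1/s - 1) := by
    have : b = (((1/s) * (-A) * ρ ^ M : ℝ) : ℂ) * exp (((M * t : ℝ) : ℂ) * I)
        - ((1/s - 1 : ℝ) : ℂ) := by
      rw [hb, haA, hpow M]; push_cast; ring
    rw [this, Complex.sub_re, Complex.re_ofReal_mul, Complex.exp_ofReal_mul_I_re, Complex.ofReal_re]
    ring
  constructor
  · rw [haA, Complex.norm_real, Real.norm_eq_abs, abs_neg]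
    exact lt_of_lt_of_le hA1 (le_abs_self _)
  · have h1 := Complex.abs_re_le_norm b
    have h2 : 0 ≤ (1/s) * A * ρ ^ M * Real.cos (M * t) := by
      have : 0 < A := by linarith
      positivity
    have h3 := neg_abs_le b.re
    linarith

/-- Suppose `liminf p i > 0`.  If there is `k ≥ 2` with `p i = 1` for
all `2 ≤ i ≤ k` and `p (k+1) < 1/2`, then `E` is not connected. -/
theorem stmt19 (p : ℕ → ℝ) (hp : ∀ i, 1 ≤ i → 0 < p i ∧ p i ≤ 1)
    (hlim : 0 < Filter.liminf p Filter.atTop)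
    (k : ℕ) (hk : 2 ≤ k) (hone : ∀ i, 2 ≤ i → i ≤ k → p i = 1)
    (hk1 : p (k+1) < 1/2) :
    ¬ IsConnected (Eset p) := by
  intro hconn
  have hp1 := (hp 1 le_rfl).1
  have hr : ∀ n, 0 < rr p n ∧ rr p n ≤ 1 := fun n => hp _ (by omega)
  obtain ⟨c, hc, n0, hrc⟩ : ∃ c : ℝ, 0 < c ∧ ∃ n0 : ℕ, ∀ n, n0 ≤ n → c ≤ rr p n := by
    obtain ⟨c, hc0, hcl⟩ := exists_between hlim
    have hbd : IsBoundedUnder (· ≥ ·) atTop p :=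
      ⟨0, eventually_map.mpr ((eventually_ge_atTop 1).mono fun i hi => (hp i hi).1.le)⟩
    have hev := eventually_lt_of_lt_liminf hcl hbd
    obtain ⟨m, hm⟩ := eventually_atTop.mp hev
    exact ⟨c, hc0, 2 * m, fun n hn => (hm _ (by omega)).le⟩
  -- basic constants
  obtain ⟨l, rfl⟩ : ∃ l, k = l + 2 := ⟨k - 2, by omega⟩
  set s := p (l+2+1) with hs_def
  have hs : 0 < s := (hp _ (by omega)).1
  set M := Nat.fib (2*l+4) with hM
  set a := Nat.fib (2*l+3) with ha
  set N := Nat.fib (2*l+5) with hN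
  have hNa : N = M + a := by
    have : Nat.fib (2*l+5) = Nat.fib (2*l+3) + Nat.fib (2*l+4) := Nat.fib_add_two
    omega
  have ha0 : 0 < a := Nat.fib_pos.mpr (by omega)
  have haM : a < M := by
    have h1 : Nat.fib (2*l+4) = Nat.fib (2*l+2) + Nat.fib (2*l+3) := Nat.fib_add_two
    have h2 : 0 < Nat.fib (2*l+2) := Nat.fib_pos.mpr (by omega)
    omega
  have hcas : M ^ 2 + 1 = N * a := cassini (l+1)
  have hN0 : 0 < N := by omega
  obtain ⟨j, hjo, hj0, hjN, hcos⟩ := angle a M N hNa ha0 haM hcas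
  set θ : ℝ := j * Real.pi / N with hθ
  -- the two critical polynomials
  have hgn : ∀ w, GG p w (2*l+3) = (1 / (s:ℂ)) * w ^ N - (1 / (s:ℂ) - 1) := by
    intro w
    obtain ⟨h1, h2⟩ := GG_pow p hp1 (l+2) hk hone w (2*l+1) (by omega)
    have h3 := GG_rec p w (2*l+1)
    have e : rr p (2*l+1+2) = s := by
      rw [hs_def, rr]; congr 1; omega
    rw [e, h1, h2] at h3
    change GG p w (2*l+1+2) = _
    rw [h3, hNa, pow_add, ← mul_assoc]
  have hgn1 : ∀ w, GG p w (2*l+4) =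
      (1 / (s:ℂ)) * GG p w (2*l+3) * w ^ M - (1 / (s:ℂ) - 1) := by
    intro w
    obtain ⟨h1, h2⟩ := GG_pow p hp1 (l+2) hk hone w (2*l+1) (by omega)
    have h3 := GG_rec p w (2*l+2)
    have e : rr p (2*l+2+2) = s := by
      rw [hs_def, rr]; congr 1; omega
    rw [e, h2] at h3
    exact h3
  have hbig : ∀ w : ℂ, 2 ≤ ‖w‖ → ∀ n, 1 < ‖GG p w n‖ := by
    intro w hw n
    refine stay1 _ _ hr (GG_rec p w) 0 ?_ ?_ n (Nat.zero_le _)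
    · rw [GG_zero p hp1]; linarith
    · rw [zero_add, GG_one p hp1 (hone 2 le_rfl hk), norm_pow]; nlinarith
  have hfr : ∀ w ∈ frontier (Om θ), 1 < ‖GG p w (2*l+3)‖ ∧ 1 < ‖GG p w (2*l+3+1)‖ := by
    intro w hw
    rcases Om_frontier θ w hw with h | h | h
    · exact ⟨hbig w h.ge _, hbig w h.ge _⟩
    · exact ray s hs hk1 M N j hN0 hjo θ ‖w‖ (norm_nonneg _) (Or.inl rfl) hcos w _ _ h
        (hgn w) (hgn1 w)
    · exact ray s hs hk1 M N j hN0 hjo (-θ) ‖w‖ (norm_nonneg _) (Or.inr rfl) hcos w _ _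
        (by push_cast; exact h) (hgn w) (hgn1 w)
  have hfr' : ∀ w ∈ frontier (Om θ), ∀ n, 2*l+3 ≤ n → 1 < ‖GG p w n‖ := fun w hw =>
    stay1 _ _ hr (GG_rec p w) _ (hfr w hw).1 (hfr w hw).2
  -- zeros
  have step : ∀ n, (∃ w ∈ Om θ, GG p w (n+1) * GG p w n = 0) →
      (∀ w ∈ frontier (Om θ), 1 < ‖GG p w (n+1) * GG p w n‖) → ∃ w ∈ Om θ, GG p w (n+2) = 0 := by
    intro n hz hf
    have hrn := hr (n+2)
    obtain ⟨w, hw, hwe⟩ := ball_sub_image (Om θ) (Om_open θ) (Om_bdd θ)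
      (fun w => GG p w (n+1) * GG p w n) ((GG_diff p (n+1)).mul (GG_diff p n)) hf hz
      ⟨2, by
        have h1 := hbig 2 (by simp) (n+1)
        have h2 := hbig 2 (by simp) n
        rw [norm_mul]; nlinarith⟩ (1 - (rr p (n+2) : ℂ))
      (by rw [norm_one_sub _ hrn.2]; linarith)
    refine ⟨w, hw, ?_⟩
    have h0 : (rr p (n+2) : ℂ) ≠ 0 := by exact_mod_cast hrn.1.ne'
    rw [GG_rec p w n, mul_assoc, hwe]
    field_simp
    ring
  have hzero0 : ∃ w ∈ Om θ, GG p w (2*l+3) = 0 := by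
    have h1s : 0 < 1 - s := by linarith
    have hNr : (0:ℝ) < N := by exact_mod_cast hN0
    set ρ : ℝ := (1 - s) ^ ((1:ℝ) / N) with hρ
    have hρ0 : 0 < ρ := Real.rpow_pos_of_pos h1s _
    have hρ1 : ρ ≤ 1 := Real.rpow_le_one h1s.le (by linarith) (by positivity)
    have hρN : ρ ^ N = 1 - s := by
      rw [hρ, one_div]; exact Real.rpow_inv_natCast_pow h1s.le hN0.ne'
    set φ : ℝ := (j+1) * Real.pi / N with hφ
    refine ⟨ρ * exp (φ * I), ?_, ?_⟩
    · have hn : ‖(ρ * exp (φ * I) : ℂ)‖ = ρ := by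
        rw [norm_mul, Complex.norm_exp_ofReal_mul_I, Complex.norm_real, Real.norm_of_nonneg hρ0.le,
          mul_one]
      refine ⟨by rw [hn]; linarith, ?_⟩
      rw [hn, Complex.re_ofReal_mul, Complex.exp_ofReal_mul_I_re]
      apply mul_lt_mul_of_pos_left _ hρ0
      have hpi := Real.pi_pos
      apply Real.cos_lt_cos_of_nonneg_of_le_pi
      · positivity
      · rw [hφ, div_le_iff₀ hNr]
        have : (j:ℝ) + 1 ≤ N := by exact_mod_cast hjN
        nlinarith
      · rw [hθ, hφ]
        gcongr
        linarith
    · rw [hgn, mul_pow, ← Complex.exp_nat_mul]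
      obtain ⟨b, hb⟩ := hjo.add_one
      have e : ((N:ℂ) * (φ * I)) = b * (2 * Real.pi * I) := by
        have : (N:ℝ) * φ = b * (2 * Real.pi) := by
          rw [hφ]
          have : (j:ℝ) + 1 = b + b := by exact_mod_cast hb
          rw [this]; field_simp; ring
        rw [← mul_assoc]
        have h2 : (N:ℂ) * (φ:ℂ) = b * (2 * Real.pi) := by exact_mod_cast this
        rw [h2]; ring
      rw [e, Complex.exp_nat_mul_two_pi_mul_I]
      have h2 : (ρ:ℂ) ^ N = 1 - s := by exact_mod_cast hρN
      rw [h2]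
      have : (s:ℂ) ≠ 0 := by exact_mod_cast hs.ne'
      field_simp
      ring
  have hprod : ∀ n, 2*l+3 ≤ n → ∀ w ∈ frontier (Om θ), 1 < ‖GG p w (n+1) * GG p w n‖ := by
    intro n hn w hw
    have h1 := hfr' w hw n hn
    have h2 := hfr' w hw (n+1) (by omega)
    rw [norm_mul]; nlinarith
  have hzero : ∀ i, ∃ w ∈ Om θ, GG p w (2*l+3+2+i) = 0 := by
    intro i
    induction i with
    | zero =>
      refine step (2*l+3) ?_ (hprod _ le_rfl)
      obtain ⟨w, hw, h⟩ := hzero0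
      exact ⟨w, hw, by rw [h, mul_zero]⟩
    | succ i ih =>
      have e2 : 2*l+3+2+(i+1) = (2*l+4+i) + 2 := by ring
      have e3 : 2*l+3+2+i = (2*l+4+i) + 1 := by ring
      rw [e2]
      rw [e3] at ih
      refine step _ ?_ (hprod _ (by omega))
      obtain ⟨w, hw, h⟩ := ih
      exact ⟨w, hw, by rw [h, zero_mul]⟩
  choose u huO hu using fun i => hzero i
  obtain ⟨ws, hws, φ, hφ, hlimu⟩ := (Om_bdd θ).isCompact_closure.tendsto_subseq
    (fun i => subset_closure (huO i))
  have hmemE : ∃ C : ℝ, ∀ n, ‖GG p ws n‖ ≤ C := by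
    apply bdd_of _ _ hr (GG_rec p ws) c hc n0 hrc
    intro m hm
    by_contra! hm1
    have hop : ∀ n, 1 < ‖GG p ws n‖ → ∀ᶠ i in atTop, 1 < ‖GG p (u (φ i)) n‖ := by
      intro n hn
      have hcont : Continuous fun w => ‖GG p w n‖ := (GG_diff p n).continuous.norm
      exact ((hcont.tendsto ws).comp hlimu).eventually (eventually_gt_nhds hn)
    obtain ⟨i, h1, h2, h3⟩ := ((hop m hm).and ((hop (m+1) hm1).and (eventually_ge_atTop m))).exists
    have h4 := stay1 _ _ hr (GG_rec p (u (φ i))) m h1 h2 (2*l+3+2+φ i)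
      (by have := hφ.id_le i; simp only [id] at this; omega)
    rw [hu] at h4
    simp at h4
    linarith
  have hwsO : ws ∈ Om θ := by
    by_contra h
    have hf : ws ∈ frontier (Om θ) := by
      rw [(Om_open θ).frontier_eq]; exact ⟨hws, h⟩
    exact escape _ _ hr (GG_rec p ws) _ (hfr ws hf).1 (hfr ws hf).2 hmemE
  -- the point 1
  have hone' : ∃ C : ℝ, ∀ n, ‖GG p 1 n‖ ≤ C := by
    have h : ∀ n, GG p 1 n = 1 ∧ GG p 1 (n+1) = 1 := by
      intro n
      induction n with
      | zero => exact ⟨GG_zero p hp1 1, by rw [zero_add, GG_one p hp1 (hone 2 le_rfl hk)]; simp⟩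
      | succ n ih =>
        refine ⟨ih.2, ?_⟩
        have := GG_rec p 1 n
        rw [ih.1, ih.2] at this
        change GG p 1 (n+2) = 1
        rw [this]; ring
    exact ⟨1, fun n => by rw [(h n).1]; simp⟩
  have hp1c : (p 1 : ℂ) ≠ 0 := by exact_mod_cast hp1.ne'
  have hE : ∀ w, (p 1 : ℂ) * w + (1 - (p 1 : ℂ)) ∈ Eset p ↔ ∃ C : ℝ, ∀ n, ‖GG p w n‖ ≤ C :=
    fun w => Iff.rfl
  let A : ℂ → ℂ := fun z => (z - (1 - (p 1 : ℂ))) / (p 1 : ℂ)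
  have hA : Continuous A := by
    simp only [A]; fun_prop
  have hAinv : ∀ z, (p 1 : ℂ) * A z + (1 - (p 1 : ℂ)) = z := by
    intro z; simp only [A]; field_simp; ring
  have hAinv2 : ∀ w, A ((p 1 : ℂ) * w + (1 - (p 1 : ℂ))) = w := by
    intro z; simp only [A]; field_simp; ring
  have hsub : Eset p ⊆ A ⁻¹' Om θ ∪ A ⁻¹' (closure (Om θ))ᶜ := by
    intro z hz
    by_cases h : A z ∈ Om θ
    · exact Or.inl h
    · right
      intro hcl
      have hf : A z ∈ frontier (Om θ) := by
        rw [(Om_open θ).frontier_eq]; exact ⟨hcl, h⟩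
      refine escape _ _ hr (GG_rec p (A z)) _ (hfr _ hf).1 (hfr _ hf).2 ?_
      rw [← hE, hAinv]; exact hz
  have hdis : Disjoint (A ⁻¹' Om θ) (A ⁻¹' (closure (Om θ))ᶜ) :=
    (Set.disjoint_compl_right_iff_subset.mpr subset_closure).preimage A
  have := hconn.isPreconnected.subset_left_of_subset_union ((Om_open θ).preimage hA)
    (isClosed_closure.isOpen_compl.preimage hA) hdis hsub
    ⟨_, (hE ws).mpr hmemE, by rw [Set.mem_preimage, hAinv2]; exact hwsO⟩
  have h1 := this ((hE 1).mpr hone')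
  rw [Set.mem_preimage, hAinv2] at h1
  have h2 := h1.2
  simp at h2
  linarith [Real.cos_le_one θ]
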